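/- arXiv:1310.1509 — 3 statements merged into one kernel-verified Lean document; each statement's English description precedes it below -/
import Mathlib

section
/- Let Ω ⊆ ℂ be an open set whose family of connected components is locally finite (every point of ℂ has a neighborhood meeting only finitely many connected components of Ω). Then there exists a sequence (K_m)_{m∈ℕ} of compact subsets of ℂ ∖ Ω, each with connected complement ℂ ∖ K_m, such that every compact set K ⊆ ℂ ∖ Ω with ℂ ∖ K connected is contained in K_m for some m. -/
open Set Metric TopologicalSpace

/-- A second-countable space has a countable family of open sets which interpolates between
compact sets and their open neighborhoods. -/
theorem exists_countable_isOpen_between_isCompact_isOpen (X : Type*) [TopologicalSpace X]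
    [SecondCountableTopology X] :
    ∃ 𝒰 : Set (Set X), 𝒰.Countable ∧ (∀ U ∈ 𝒰, IsOpen U) ∧
      ∀ P W : Set X, IsCompact P → IsOpen W → P ⊆ W → ∃ U ∈ 𝒰, P ⊆ U ∧ U ⊆ W := by
  refine ⟨sUnion '' {t : Set (Set X) | t.Finite ∧ t ⊆ countableBasis X},
    (countable_ofPred_finite_subset (countable_countableBasis X)).image _, ?_, ?_⟩
  · rintro _ ⟨t, ⟨-, ht⟩, rfl⟩
    exact isOpen_sUnion fun s hs ↦ isOpen_of_mem_countableBasis (ht hs)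
  · intro P W hP hW hPW
    obtain ⟨S, hS, rfl⟩ := (isBasis_countableBasis X).open_eq_sUnion hW
    obtain ⟨t, htS, ht, hPt⟩ := hP.elim_finite_subcover_image (b := S) (c := id)
      (fun s hs ↦ isOpen_of_mem_countableBasis (hS hs)) (by rwa [sUnion_eq_biUnion] at hPW)
    exact ⟨⋃₀ t, ⟨t, ⟨ht, htS.trans hS⟩, rfl⟩, by rwa [sUnion_eq_biUnion],
      sUnion_subset_sUnion htS⟩

/-- The exterior of a closed disc in the plane is connected. -/
theorem Complex.isPreconnected_compl_closedBall_zero {r : ℝ} (hr : 0 ≤ r) :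
    IsPreconnected (closedBall (0 : ℂ) r)ᶜ := by
  have himage : (closedBall (0 : ℂ) r)ᶜ =
      (fun p : ℝ × ℝ ↦ (p.1 : ℂ) * Complex.exp (p.2 * Complex.I)) '' (Ioi r ×ˢ univ) := by
    ext z
    simp only [mem_compl_iff, mem_closedBall, dist_zero_right, not_le, mem_image, mem_prod,
      mem_Ioi, mem_univ, and_true, Prod.exists]
    constructor
    · exact fun hz ↦ ⟨‖z‖, z.arg, hz, Complex.norm_mul_exp_arg_mul_I z⟩
    · rintro ⟨a, b, ha, rfl⟩
      rwa [norm_mul, Complex.norm_exp_ofReal_mul_I, mul_one, Complex.norm_real,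
        Real.norm_of_nonneg (hr.trans ha.le)]
  rw [himage]
  exact (isPreconnected_Ioi.prod isPreconnected_univ).image _ (by fun_prop)

/-- A locally finite collection of sets has only finitely many members meeting a compact set. -/
theorem IsCompact.finite_setOf_inter_nonempty {X : Type*} [TopologicalSpace X] {L : Set X}
    (hL : IsCompact L) {p : Set X → Prop}
    (hp : ∀ z : X, ∃ U ∈ nhds z, {C : Set X | p C ∧ (C ∩ U).Nonempty}.Finite) :
    {C : Set X | p C ∧ (C ∩ L).Nonempty}.Finite := by
  choose U hU hfin using hp
  obtain ⟨t, -, ht⟩ := hL.elim_nhds_subcover U fun x _ ↦ hU x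
  refine (t.finite_toSet.biUnion fun z _ ↦ hfin z).subset ?_
  rintro C ⟨hC, x, hxC, hxL⟩
  obtain ⟨z, hz, hxz⟩ := mem_iUnion₂.1 (ht hxL)
  exact mem_biUnion hz ⟨hC, x, hxC, hxz⟩

/-- In a path-connected set `W`, finitely many sets meeting `W` can be joined to a given point
inside a single compact subset of `W`. -/
theorem IsPathConnected.exists_isCompact_joining {X : Type*} [TopologicalSpace X] {W : Set X}
    (hW : IsPathConnected W) {w : X} (hw : w ∈ W) {𝒞 : Set (Set X)} (hfin : 𝒞.Finite)
    (hne : ∀ C ∈ 𝒞, (C ∩ W).Nonempty) :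
    ∃ P ⊆ W, IsCompact P ∧
      ∀ C ∈ 𝒞, ∃ γ ⊆ P, IsPreconnected γ ∧ w ∈ γ ∧ (C ∩ γ).Nonempty := by
  have hpath : ∀ C ∈ 𝒞, ∃ γ ⊆ W, IsCompact γ ∧ IsPreconnected γ ∧ w ∈ γ ∧ (C ∩ γ).Nonempty := by
    intro C hC
    obtain ⟨z, hzC, hzW⟩ := hne C hC
    obtain ⟨γ, hγ⟩ := hW.joinedIn w hw z hzW
    exact ⟨range γ, range_subset_iff.2 hγ, isCompact_range γ.continuous,
      isPreconnected_range γ.continuous, ⟨0, γ.source⟩, z, hzC, 1, γ.target⟩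
  choose! γ hγW hγ hγc hγw hγC using hpath
  exact ⟨⋃ C ∈ 𝒞, γ C, iUnion₂_subset hγW, hfin.isCompact_biUnion hγ,
    fun C hC ↦ ⟨γ C, subset_biUnion_of_mem hC, hγc C hC, hγw C hC, hγC C hC⟩⟩

/-- **Proposition 2.3.** If the connected components of an open set `Ω ⊆ ℂ` form a locally
finite family, then there is a sequence of compact subsets of `ℂ ∖ Ω`, each with connected
complement, which absorbs every compact subset of `ℂ ∖ Ω` with connected complement. -/
theorem exists_exhaustion_of_compacts_in_complement
    (Ω : Set ℂ) (hΩ : IsOpen Ω)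
    (hlf : ∀ z : ℂ, ∃ U ∈ nhds z,
      {C : Set ℂ | (∃ x ∈ Ω, C = connectedComponentIn Ω x) ∧ (C ∩ U).Nonempty}.Finite) :
    ∃ K : ℕ → Set ℂ,
      (∀ m : ℕ, IsCompact (K m) ∧ K m ⊆ Ωᶜ ∧ IsConnected (K m)ᶜ) ∧
      ∀ J : Set ℂ, IsCompact J → J ⊆ Ωᶜ → IsConnected Jᶜ → ∃ m : ℕ, J ⊆ K m := by
  obtain ⟨𝒰, h𝒰c, h𝒰o, h𝒰⟩ := exists_countable_isOpen_between_isCompact_isOpen ℂ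
  let w : ℕ → ℂ := fun N ↦ ((N + 1 : ℕ) : ℂ)
  have hw (N : ℕ) : w N ∈ (closedBall (0 : ℂ) N)ᶜ := by
    simp only [w, mem_compl_iff, mem_closedBall, dist_zero_right, Complex.norm_natCast]
    push_cast
    linarith
  let V : ℕ → Set ℂ → Set ℂ := fun N U ↦
    connectedComponentIn ((closedBall (0 : ℂ) N)ᶜ ∪ Ω ∪ U) (w N)
  have hwV (N : ℕ) (U : Set ℂ) : w N ∈ (closedBall (0 : ℂ) N)ᶜ ∪ Ω ∪ U :=
    Or.inl (Or.inl (hw N))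
  have hext (N : ℕ) (U : Set ℂ) : (closedBall (0 : ℂ) N)ᶜ ⊆ V N U :=
    (Complex.isPreconnected_compl_closedBall_zero N.cast_nonneg).subset_connectedComponentIn
      (hw N) (subset_union_left.trans subset_union_left)
  let 𝒦 : Set (Set ℂ) := insert ∅
    {K | ∃ N : ℕ, ∃ U ∈ 𝒰, Ω ⊆ V N U ∧ K = (V N U)ᶜ}
  have h𝒦c : 𝒦.Countable := by
    refine Countable.insert _ (((countable_univ (α := ℕ)).prod h𝒰c).image
      (fun p ↦ (V p.1 p.2)ᶜ) |>.mono ?_)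
    rintro _ ⟨N, U, hU, -, rfl⟩
    exact ⟨(N, U), ⟨mem_univ _, hU⟩, rfl⟩
  obtain ⟨K, hK⟩ := h𝒦c.exists_eq_range ⟨∅, mem_insert _ _⟩
  refine ⟨K, fun m ↦ ?_, fun J hJ hJΩ hJc ↦ ?_⟩
  · have hm : K m ∈ 𝒦 := hK ▸ mem_range_self m
    rcases hm with hm | ⟨N, U, hU, hΩV, hm⟩
    · rw [hm, compl_empty]
      exact ⟨isCompact_empty, empty_subset _, isConnected_univ⟩
    · rw [hm, compl_compl]
      have hVo : IsOpen (V N U) :=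
        ((isClosed_closedBall.isOpen_compl.union hΩ).union (h𝒰o U hU)).connectedComponentIn
      exact ⟨(isCompact_closedBall (0 : ℂ) N).of_isClosed_subset hVo.isClosed_compl
        (compl_subset_comm.1 (hext N U)), compl_subset_compl.2 hΩV,
        isConnected_connectedComponentIn_iff.2 (hwV N U)⟩
  · obtain ⟨r, hr⟩ := hJ.isBounded.subset_closedBall (0 : ℂ)
    obtain ⟨N, hN⟩ := exists_nat_ge r
    have hJN : J ⊆ closedBall 0 (N : ℝ) := hr.trans (closedBall_subset_closedBall hN)
    have hΩJ : Ω ⊆ Jᶜ := subset_compl_comm.1 hJΩ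
    have hJo : IsOpen Jᶜ := hJ.isClosed.isOpen_compl
    obtain ⟨P, hPJ, hP, hjoin⟩ :=
      (hJo.isConnected_iff_isPathConnected.1 hJc).exists_isCompact_joining
        (compl_subset_compl.2 hJN (hw N))
        ((isCompact_closedBall (0 : ℂ) N).finite_setOf_inter_nonempty hlf) (by
          rintro _ ⟨⟨x, hx, rfl⟩, -⟩
          exact ⟨x, mem_connectedComponentIn hx, hΩJ hx⟩)
    obtain ⟨U, hU, hPU, hUJ⟩ := h𝒰 P Jᶜ hP hJo hPJ
    have hΩV : Ω ⊆ V N U := by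
      intro x hx
      by_cases hxN : (connectedComponentIn Ω x ∩ closedBall 0 (N : ℝ)).Nonempty
      · obtain ⟨γ, hγP, hγ, hwγ, y, hyC, hyγ⟩ := hjoin _ ⟨⟨x, hx, rfl⟩, hxN⟩
        refine (hγ.union y hyγ hyC isPreconnected_connectedComponentIn).subset_connectedComponentIn
          (Or.inl hwγ) (union_subset ?_ ?_) (Or.inr (mem_connectedComponentIn hx))
        · exact (hγP.trans hPU).trans subset_union_right
        · exact (connectedComponentIn_subset Ω x).trans
            (subset_union_right.trans subset_union_left)
      · exact hext N U fun hxb ↦ hxN ⟨x, mem_connectedComponentIn hx, hxb⟩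
    have hmem : (V N U)ᶜ ∈ range K := hK ▸ Or.inr ⟨N, U, hU, hΩV, rfl⟩
    obtain ⟨m, hm⟩ := hmem
    refine ⟨m, hm ▸ subset_compl_comm.1 ((connectedComponentIn_subset _ _).trans ?_)⟩
    exact union_subset (union_subset (compl_subset_compl.2 hJN) hΩJ) hUJ
end

section
/- Let Ω ⊆ ℂ be an open set whose family of connected components is locally finite (every point of ℂ has a neighborhood meeting only finitely many connected components of Ω). Then there exists a sequence (K_m)_{m∈ℕ} of compact subsets of ℂ ∖ closure(Ω), each with connected complement ℂ ∖ K_m, such that every compact set K ⊆ ℂ ∖ closure(Ω) with ℂ ∖ K connected is contained in K_m for some m. -/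
open Set TopologicalSpace Metric

/-- A compact subset of an open preconnected set `V` and a nonempty open connected set `E ⊆ V` can
be joined inside `V` by finitely many members of a basis of preconnected sets. -/
theorem IsPreconnected.exists_finite_basis_isConnected_union {X : Type*} [TopologicalSpace X]
    {b : Set (Set X)} (hb : IsTopologicalBasis b) (hbc : ∀ s ∈ b, IsPreconnected s)
    {V E C : Set X} (hV : IsPreconnected V) (hVo : IsOpen V) (hE : IsConnected E) (hEo : IsOpen E)
    (hEV : E ⊆ V) (hC : IsCompact C) (hCV : C ⊆ V) :
    ∃ t : Set (Set X), t.Finite ∧ t ⊆ b ∧ E ∪ ⋃₀ t ⊆ V ∧ IsConnected (E ∪ ⋃₀ t) ∧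
      C ⊆ E ∪ ⋃₀ t := by
  let ι := {t : Set (Set X) // t.Finite ∧ t ⊆ b ∧ E ∪ ⋃₀ t ⊆ V ∧ IsConnected (E ∪ ⋃₀ t)}
  let W : ι → Set X := fun t ↦ E ∪ ⋃₀ t.1
  have : Nonempty ι := ⟨∅, finite_empty, empty_subset b, by simpa using hEV, by simpa using hE⟩
  have hWo (t : ι) : IsOpen (W t) :=
    hEo.union (isOpen_sUnion fun s hs ↦ hb.isOpen (t.2.2.1 hs))
  have hdir : Directed (· ⊆ ·) W := by
    rintro ⟨t, htf, htb, htV, htc⟩ ⟨u, huf, hub, huV, huc⟩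
    have h : E ∪ ⋃₀ (t ∪ u) = (E ∪ ⋃₀ t) ∪ (E ∪ ⋃₀ u) := by
      rw [sUnion_union, union_union_distrib_left]
    refine ⟨⟨t ∪ u, htf.union huf, union_subset htb hub, ?_, ?_⟩, ?_, ?_⟩
    · exact h ▸ union_subset htV huV
    · exact h ▸ htc.union (hE.nonempty.mono
        (subset_inter subset_union_left subset_union_left)) huc
    · exact subset_union_left.trans h.ge
    · exact subset_union_right.trans h.ge
  have hcover : V ⊆ ⋃ t, W t := by
    refine hV.subset_of_closure_inter_subset (isOpen_iUnion hWo) ?_ ?_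
    · obtain ⟨x, hx⟩ := hE.nonempty
      exact ⟨x, hEV hx, mem_iUnion.2 ⟨Classical.arbitrary ι, Or.inl hx⟩⟩
    · rintro x ⟨hx, hxV⟩
      obtain ⟨B, hBb, hxB, hBV⟩ := hb.exists_subset_of_mem_open hxV hVo
      obtain ⟨y, hyB, hy⟩ := mem_closure_iff.1 hx B (hb.isOpen hBb) hxB
      obtain ⟨⟨t, htf, htb, htV, htc⟩, hyt⟩ := mem_iUnion.1 hy
      have h : E ∪ ⋃₀ (insert B t) = (E ∪ ⋃₀ t) ∪ B := by
        rw [sUnion_insert, union_comm B, union_assoc]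
      refine mem_iUnion.2 ⟨⟨insert B t, htf.insert B, insert_subset hBb htb, ?_, ?_⟩, ?_⟩
      · exact h ▸ union_subset htV hBV
      · exact h ▸ htc.union ⟨y, hyt, hyB⟩ ⟨⟨x, hxB⟩, hbc B hBb⟩
      · exact h.ge (Or.inr hxB)
  obtain ⟨t, ht⟩ := hC.elim_directed_cover W hWo (hCV.trans hcover) hdir
  exact ⟨t.1, t.2.1, t.2.2.1, t.2.2.2.1, t.2.2.2.2, ht⟩

theorem Complex.isConnected_compl_closedBall_zero {r : ℝ} (hr : 0 < r) :
    IsConnected (closedBall (0 : ℂ) r)ᶜ := by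
  have h : (closedBall (0 : ℂ) r)ᶜ = Complex.exp '' {z | Real.log r < z.re} := by
    ext z
    simp only [mem_compl_iff, mem_closedBall, dist_zero_right, not_le, mem_image, mem_ofPred_eq]
    constructor
    · intro hz
      refine ⟨Complex.log z, ?_, Complex.exp_log (norm_pos_iff.1 (hr.trans hz))⟩
      rw [Complex.log_re]
      exact Real.log_lt_log hr hz
    · rintro ⟨w, hw, rfl⟩
      rw [Complex.norm_exp]
      exact (Real.log_lt_iff_lt_exp hr).1 hw
  have hconn : IsConnected {z : ℂ | Real.log r < z.re} :=
    ⟨⟨(Real.log r + 1 : ℝ), by simp⟩, (convex_halfSpace_re_gt _).isPreconnected⟩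
  exact h ▸ hconn.image _ Complex.continuous_exp.continuousOn

/-- The compact subsets with connected complement of an open subset of `ℂ` have a countable
cofinal family. -/
theorem IsOpen.exists_seq_isCompact_isConnected_compl {U : Set ℂ} (hU : IsOpen U) :
    ∃ K : ℕ → Set ℂ, (∀ m, IsCompact (K m) ∧ K m ⊆ U ∧ IsConnected (K m)ᶜ) ∧
      ∀ J : Set ℂ, IsCompact J → J ⊆ U → IsConnected Jᶜ → ∃ m, J ⊆ K m := by
  obtain ⟨b, hbs, hbcount, hb⟩ :=
    (IsTopologicalBasis.isOpen_isPreconnected (α := ℂ)).exists_countable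
  let E : ℕ → Set ℂ := fun n ↦ (closedBall 0 (n + 1))ᶜ
  let f : ℕ × Set (Set ℂ) → Set ℂ := fun p ↦ (E p.1 ∪ ⋃₀ p.2)ᶜ
  let F : Set (Set ℂ) := f '' (univ ×ˢ {t | t.Finite ∧ t ⊆ b}) ∩ {K | K ⊆ U ∧ IsConnected Kᶜ}
  have hF : F.Countable :=
    ((countable_univ.prod (countable_ofPred_finite_subset hbcount)).image f).mono inter_subset_left
  have hcofinal (J : Set ℂ) (hJ : IsCompact J) (hJU : J ⊆ U) (hJc : IsConnected Jᶜ) :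
      ∃ K ∈ F, J ⊆ K := by
    obtain ⟨r, hr⟩ := hJ.isBounded.subset_closedBall 0
    obtain ⟨n, hn⟩ := exists_nat_ge r
    have hJn : J ⊆ closedBall 0 (n + 1) :=
      hr.trans (closedBall_subset_closedBall (by linarith))
    obtain ⟨t, htf, htb, htJ, htc, ht⟩ :=
      hJc.isPreconnected.exists_finite_basis_isConnected_union hb (fun s hs ↦ (hbs hs).2)
        hJ.isClosed.isOpen_compl (Complex.isConnected_compl_closedBall_zero n.cast_add_one_pos)
        isClosed_closedBall.isOpen_compl (compl_subset_compl.2 hJn)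
        ((isCompact_closedBall (0 : ℂ) (n + 1)).inter_right hU.isClosed_compl)
        (inter_subset_right.trans (compl_subset_compl.2 hJU))
    refine ⟨f (n, t), ⟨⟨(n, t), ⟨mem_univ _, htf, htb⟩, rfl⟩, ?_, ?_⟩, subset_compl_comm.1 htJ⟩
    · refine compl_subset_comm.1 fun z hz ↦ ?_
      by_cases hzn : z ∈ closedBall (0 : ℂ) (n + 1)
      · exact ht ⟨hzn, hz⟩
      · exact Or.inl hzn
    · simpa only [f, compl_compl] using htc
  obtain ⟨K₀, hK₀, -⟩ := hcofinal ∅ isCompact_empty (empty_subset U)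
    (by simpa using isConnected_univ (α := ℂ))
  obtain ⟨K, hK⟩ := hF.exists_eq_range ⟨K₀, hK₀⟩
  refine ⟨K, fun m ↦ ?_, fun J hJ hJU hJc ↦ ?_⟩
  · obtain ⟨⟨⟨n, t⟩, ⟨-, -, htb⟩, hm⟩, hKU, hKc⟩ := hK.ge (mem_range_self m)
    refine ⟨?_, hKU, hKc⟩
    rw [← hm]
    refine (isCompact_closedBall (0 : ℂ) (n + 1)).of_isClosed_subset ?_
      (compl_subset_comm.1 subset_union_left)
    exact (isClosed_closedBall.isOpen_compl.union
      (isOpen_sUnion fun s hs ↦ hb.isOpen (htb hs))).isClosed_compl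
  · obtain ⟨L, hL, hJL⟩ := hcofinal J hJ hJU hJc
    obtain ⟨m, rfl⟩ := hK.le hL
    exact ⟨m, hJL⟩

/-- **Proposition 2.4.** If the connected components of an open set `Ω ⊆ ℂ` form a locally
finite family, then there is a sequence of compact subsets of `ℂ ∖ closure Ω`, each with
connected complement, which absorbs every compact subset of `ℂ ∖ closure Ω` with connected
complement. -/
theorem exists_exhaustion_of_compacts_in_complement_closure
    (Ω : Set ℂ) (hΩ : IsOpen Ω)
    (hlf : ∀ z : ℂ, ∃ U ∈ nhds z,
      {C : Set ℂ | (∃ x ∈ Ω, C = connectedComponentIn Ω x) ∧ (C ∩ U).Nonempty}.Finite) :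
    ∃ K : ℕ → Set ℂ,
      (∀ m : ℕ, IsCompact (K m) ∧ K m ⊆ (closure Ω)ᶜ ∧ IsConnected (K m)ᶜ) ∧
      ∀ J : Set ℂ, IsCompact J → J ⊆ (closure Ω)ᶜ → IsConnected Jᶜ → ∃ m : ℕ, J ⊆ K m := by
  exact isClosed_closure.isOpen_compl.exists_seq_isCompact_isConnected_compl
end

section
/- Let Ω ⊆ ℂ be an open set and let K ⊆ closure(Ω) be compact. Let U be the union of those bounded connected components of ℂ ∖ K that are entirely contained in Ω. Then K ∪ U is compact. -/
/-- If `K` lies in a closed ball around the origin, a point whose connected component in `Kᶜ` is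
bounded lies in that ball: otherwise the ray from it to infinity would be in the component. -/
theorem norm_le_of_isBounded_connectedComponentIn_compl {E : Type*} [NormedAddCommGroup E]
    [NormedSpace ℝ E] {K : Set E} {R : ℝ} (hR : 0 ≤ R) (hK : ∀ x ∈ K, ‖x‖ ≤ R) {z : E}
    (hz : Bornology.IsBounded (connectedComponentIn Kᶜ z)) : ‖z‖ ≤ R := by
  by_contra! hlt
  have hpos : 0 < ‖z‖ := hR.trans_lt hlt
  have hray : (fun t : ℝ => t • z) '' Set.Ici 1 ⊆ connectedComponentIn Kᶜ z := by
    refine IsPreconnected.subset_connectedComponentIn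
      (isPreconnected_Ici.image _ (by fun_prop)) ⟨1, Set.self_mem_Ici, one_smul _ _⟩ ?_
    rintro _ ⟨t, ht, rfl⟩ hmem
    have ht : 1 ≤ t := ht
    have hle := hK _ hmem
    rw [norm_smul, Real.norm_of_nonneg (by linarith)] at hle
    nlinarith
  obtain ⟨C, hC⟩ := (hz.subset hray).exists_norm_le
  have ht : 1 ≤ (|C| + 1) / ‖z‖ + 1 := by
    have : 0 ≤ (|C| + 1) / ‖z‖ := by positivity
    linarith
  have hle := hC _ ⟨_, ht, rfl⟩
  rw [norm_smul, Real.norm_of_nonneg (by linarith), add_mul, div_mul_cancel₀ _ hpos.ne'] at hle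
  linarith [le_abs_self C]

/-- The union of a closed set `K` with any family of connected components of `Kᶜ` is closed in a
locally connected space. -/
theorem IsClosed.union_biUnion_connectedComponentIn_compl {X : Type*} [TopologicalSpace X]
    [LocallyConnectedSpace X] {K : Set X} (hK : IsClosed K) (S : Set X) :
    IsClosed (K ∪ ⋃ z ∈ S, connectedComponentIn Kᶜ z) := by
  rw [← isOpen_compl_iff, isOpen_iff_mem_nhds]
  intro w hw
  simp only [Set.mem_compl_iff, Set.mem_union, Set.mem_iUnion, not_or, not_exists] at hw
  refine Filter.mem_of_superset (hK.isOpen_compl.connectedComponentIn.mem_nhds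
    (mem_connectedComponentIn hw.1)) fun y hy hmem => ?_
  rcases hmem with hyK | hyU
  · exact connectedComponentIn_subset _ _ hy hyK
  · simp only [Set.mem_iUnion] at hyU
    obtain ⟨z, hz, hyz⟩ := hyU
    refine hw.2 z hz ?_
    rw [connectedComponentIn_eq hyz, ← connectedComponentIn_eq hy]
    exact mem_connectedComponentIn hw.1

/-- The key step in Proposition 2.8: for `Ω ⊆ ℂ` open and `K ⊆ closure Ω` compact, the
union of `K` with all bounded connected components of `ℂ ∖ K` entirely contained in `Ω`
is compact. -/
theorem isCompact_union_bounded_components_in_Omega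
    (Ω : Set ℂ) (hΩ : IsOpen Ω) (K : Set ℂ) (hK : IsCompact K) (hKΩ : K ⊆ closure Ω) :
    IsCompact (K ∪
      ⋃ z ∈ {z : ℂ | z ∉ K ∧ Bornology.IsBounded (connectedComponentIn Kᶜ z) ∧
        connectedComponentIn Kᶜ z ⊆ Ω}, connectedComponentIn Kᶜ z) := by
  obtain ⟨R, hR, hKR⟩ := hK.isBounded.exists_pos_norm_le
  refine Metric.isCompact_of_isClosed_isBounded
    (hK.isClosed.union_biUnion_connectedComponentIn_compl _)
    (hK.isBounded.union ((Metric.isBounded_closedBall (x := (0 : ℂ)) (r := R)).subset ?_))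
  refine Set.iUnion₂_subset fun z hz w hw => mem_closedBall_zero_iff.2 ?_
  refine norm_le_of_isBounded_connectedComponentIn_compl hR.le hKR ?_
  rw [← connectedComponentIn_eq hw]
  exact hz.2.1
end
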